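/- Let n ≥ 1 and let h, ψ, ψ̃ : ℂ → M_n(ℂ) be smooth maps with h(w) invertible for every w ∈ ℂ. Define pointwise A_w := h⁻¹ ∂_w h, A_w̄ := 0, φ_w := h⁻¹ (∂_w ψ) h, and φ̃_w̄ := ∂_w̄ ψ̃. Then the Lax connection of the Hitchin system built from these components is flat for every spectral parameter z ∈ ℂ ∖ {0} if and only if for all w ∈ ℂ: (i) ∂_w̄(h⁻¹ ∂_w h)(w) = [h(w)⁻¹ (∂_w ψ)(w) h(w), (∂_w̄ ψ̃)(w)], (ii) ∂_w̄(h⁻¹ (∂_w ψ) h)(w) = 0, and (iii) ∂_w(∂_w̄ ψ̃)(w) + [h(w)⁻¹ (∂_w h)(w), (∂_w̄ ψ̃)(w)] = 0. (These are Hitchin's equations in a holomorphic gauge, expressed in terms of the Hermitian-metric potential h and the Higgs-field potentials ψ, ψ̃.) -/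

import Mathlib

open Matrix Complex

attribute [local instance] Matrix.normedAddCommGroup Matrix.normedSpace

/-- Wirtinger derivative ∂_w F(w) = (1/2)(DF(w)(1) - i·DF(w)(i)). -/
noncomputable def wderiv {E : Type*} [NormedAddCommGroup E] [NormedSpace ℂ E]
    (F : ℂ → E) (w : ℂ) : E :=
  (2 : ℂ)⁻¹ • (fderiv ℝ F w 1 - Complex.I • fderiv ℝ F w Complex.I)

/-- Wirtinger derivative ∂_w̄ F(w) = (1/2)(DF(w)(1) + i·DF(w)(i)). -/
noncomputable def wbarderiv {E : Type*} [NormedAddCommGroup E] [NormedSpace ℂ E]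
    (F : ℂ → E) (w : ℂ) : E :=
  (2 : ℂ)⁻¹ • (fderiv ℝ F w 1 + Complex.I • fderiv ℝ F w Complex.I)

/-- dw-component of the Lax connection: 𝒜_w(z,w) = A_w(w) + z⁻¹ φ_w(w). -/
noncomputable def laxW {n : ℕ} (Aw φw : ℂ → Matrix (Fin n) (Fin n) ℂ) (z w : ℂ) :
    Matrix (Fin n) (Fin n) ℂ :=
  Aw w + z⁻¹ • φw w

/-- dw̄-component of the Lax connection: 𝒜_w̄(z,w) = A_w̄(w) + z φ̃_w̄(w). -/
noncomputable def laxWbar {n : ℕ} (Awb φtwb : ℂ → Matrix (Fin n) (Fin n) ℂ) (z w : ℂ) :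
    Matrix (Fin n) (Fin n) ℂ :=
  Awb w + z • φtwb w

/-- Curvature of the Lax connection at spectral parameter z. -/
noncomputable def laxCurvature {n : ℕ} (Aw Awb φw φtwb : ℂ → Matrix (Fin n) (Fin n) ℂ)
    (z w : ℂ) : Matrix (Fin n) (Fin n) ℂ :=
  wderiv (laxWbar Awb φtwb z) w - wbarderiv (laxW Aw φw z) w
    + (laxW Aw φw z w * laxWbar Awb φtwb z w - laxWbar Awb φtwb z w * laxW Aw φw z w)

/-!
The curvature of the Lax connection is a Laurent polynomial in the spectral parameter, with
coefficients `F_A + [φ_w, φ̃_w̄]`, `D_w φ̃_w̄` and `-D_w̄ φ_w` in degrees `0`, `1` and `-1`. It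
vanishes for all `z ≠ 0` exactly when each coefficient does, and these are Hitchin's equations. In a
holomorphic gauge `A_w̄ = 0`, so `F_A = -∂_w̄ A_w` and `D_w̄ = ∂_w̄`.
-/

theorem forall_add_smul_add_inv_smul_eq_zero_iff {K V : Type*} [Field K] [CharZero K]
    [AddCommGroup V] [Module K V] {a b c : V} :
    (∀ z : K, z ≠ 0 → a + z • b + z⁻¹ • c = 0) ↔ a = 0 ∧ b = 0 ∧ c = 0 := by
  refine ⟨fun H => ?_, by rintro ⟨rfl, rfl, rfl⟩ z -; simp⟩
  have at_one : a + b + c = 0 := by simpa using H 1 one_ne_zero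
  have at_neg_one : a - b - c = 0 := by
    simpa [sub_eq_add_neg, inv_neg] using H (-1) (neg_ne_zero.2 one_ne_zero)
  have at_two : a + (2 : K) • b + (2 : K)⁻¹ • c = 0 := H 2 two_ne_zero
  have ha : a = 0 := by
    linear_combination (norm := module) (2⁻¹ : K) • at_one + (2⁻¹ : K) • at_neg_one
  have hb : b = 0 := by
    linear_combination (norm := module)
      (2 / 3 : K) • at_two - (3⁻¹ : K) • at_one - (3⁻¹ : K) • ha
  exact ⟨ha, hb, by simpa [ha, hb] using at_one⟩

theorem differentiableAt_fderiv_apply {𝕜 E F : Type*} [NontriviallyNormedField 𝕜]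
    [NormedAddCommGroup E] [NormedSpace 𝕜 E] [NormedAddCommGroup F] [NormedSpace 𝕜 F]
    {f : E → F} {x : E} (hf : ContDiffAt 𝕜 2 f x) (v : E) :
    DifferentiableAt 𝕜 (fun y => fderiv 𝕜 f y v) x :=
  ((hf.fderiv_right (m := 1) one_add_one_eq_two.le).differentiableAt one_ne_zero).clm_apply
    (differentiableAt_const v)

section Wirtinger

variable {E : Type*} [NormedAddCommGroup E] [NormedSpace ℂ E] {F G : ℂ → E} {w : ℂ}

theorem wderiv_add (hF : DifferentiableAt ℝ F w) (hG : DifferentiableAt ℝ G w) :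
    wderiv (F + G) w = wderiv F w + wderiv G w := by
  simp only [wderiv, fderiv_add hF hG, _root_.add_apply]
  module

theorem wbarderiv_add (hF : DifferentiableAt ℝ F w) (hG : DifferentiableAt ℝ G w) :
    wbarderiv (F + G) w = wbarderiv F w + wbarderiv G w := by
  simp only [wbarderiv, fderiv_add hF hG, _root_.add_apply]
  module

theorem wderiv_const_smul (c : ℂ) (F : ℂ → E) (w : ℂ) :
    wderiv (c • F) w = c • wderiv F w := by
  simp only [wderiv, fderiv_const_smul_field, Pi.smul_apply, _root_.smul_apply]
  module

theorem wbarderiv_const_smul (c : ℂ) (F : ℂ → E) (w : ℂ) :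
    wbarderiv (c • F) w = c • wbarderiv F w := by
  simp only [wbarderiv, fderiv_const_smul_field, Pi.smul_apply, _root_.smul_apply]
  module

theorem wderiv_const (e : E) (w : ℂ) : wderiv (fun _ => e) w = 0 := by
  simp [wderiv]

theorem differentiableAt_wderiv (hF : ContDiffAt ℝ 2 F w) : DifferentiableAt ℝ (wderiv F) w :=
  ((differentiableAt_fderiv_apply hF 1).sub
    ((differentiableAt_fderiv_apply hF I).const_smul I)).const_smul (2 : ℂ)⁻¹

theorem differentiableAt_wbarderiv (hF : ContDiffAt ℝ 2 F w) :
    DifferentiableAt ℝ (wbarderiv F) w :=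
  ((differentiableAt_fderiv_apply hF 1).add
    ((differentiableAt_fderiv_apply hF I).const_smul I)).const_smul (2 : ℂ)⁻¹

end Wirtinger

section MatrixCalculus

variable {𝕜 E R l m n : Type*} [NontriviallyNormedField 𝕜] [NormedAddCommGroup E]
  [NormedSpace 𝕜 E] [Fintype m] {x : E}

theorem differentiableAt_matrix_mul [Finite n] [NormedRing R] [NormedAlgebra 𝕜 R]
    {M : E → Matrix l m R} {N : E → Matrix m n R}
    (hM : DifferentiableAt 𝕜 M x) (hN : DifferentiableAt 𝕜 N x) :
    DifferentiableAt 𝕜 (fun y => M y * N y) x :=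
  have := Fintype.ofFinite n
  differentiableAt_pi.2 fun i => differentiableAt_pi.2 fun j =>
    DifferentiableAt.fun_sum fun k _ =>
      (differentiableAt_pi.1 (differentiableAt_pi.1 hM i) k).fun_mul
        (differentiableAt_pi.1 (differentiableAt_pi.1 hN k) j)

theorem differentiableAt_matrix_inv [NormedCommRing R] [NormedAlgebra 𝕜 R] [CompleteSpace R]
    [DecidableEq m] {M : E → Matrix m m R}
    (hM : DifferentiableAt 𝕜 M x) (hx : IsUnit (M x)) :
    DifferentiableAt 𝕜 (fun y => (M y)⁻¹) x := by
  -- Differentiability depends only on the topology, so we are free to use the `L∞` operator norm,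
  -- for which the square matrices form a complete normed ring.
  let _ : NormedRing (Matrix m m R) := Matrix.linftyOpNormedRing
  let _ : NormedAlgebra 𝕜 (Matrix m m R) := Matrix.linftyOpNormedAlgebra
  have : HasSummableGeomSeries (Matrix m m R) :=
    @instHasSummableGeomSeriesOfCompleteSpace _ _ (inferInstanceAs (CompleteSpace (m → m → R)))
  simp only [nonsing_inv_eq_ringInverse]
  exact hM.inverse hx

end MatrixCalculus

section LaxConnection

variable {n : ℕ}

/-- The curvature `∂_w A_w̄ - ∂_w̄ A_w + [A_w, A_w̄]` of the connection with components
`A_w`, `A_w̄`, to which the curvature of the Lax connection reduces for vanishing Higgs field. -/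
noncomputable def gaugeCurvature (Aw Awb : ℂ → Matrix (Fin n) (Fin n) ℂ) (w : ℂ) :
    Matrix (Fin n) (Fin n) ℂ :=
  wderiv Awb w - wbarderiv Aw w + ⁅Aw w, Awb w⁆

/-- The covariant derivative `D_w F = ∂_w F + [A_w, F]` of a matrix field in the adjoint
representation. -/
noncomputable def covWderiv (Aw F : ℂ → Matrix (Fin n) (Fin n) ℂ) (w : ℂ) :
    Matrix (Fin n) (Fin n) ℂ :=
  wderiv F w + ⁅Aw w, F w⁆

/-- The covariant derivative `D_w̄ F = ∂_w̄ F + [A_w̄, F]` of a matrix field in the adjoint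
representation. -/
noncomputable def covWbarderiv (Awb F : ℂ → Matrix (Fin n) (Fin n) ℂ) (w : ℂ) :
    Matrix (Fin n) (Fin n) ℂ :=
  wbarderiv F w + ⁅Awb w, F w⁆

/-- Hitchin's equations at the point `w`, in an arbitrary gauge, for a connection
`(A_w, A_w̄)` and Higgs field components `(φ_w, φ̃_w̄)`. -/
structure HitchinEquationsAt (Aw Awb φw φtwb : ℂ → Matrix (Fin n) (Fin n) ℂ) (w : ℂ) :
    Prop where
  gaugeCurvature_add_lie_eq_zero : gaugeCurvature Aw Awb w + ⁅φw w, φtwb w⁆ = 0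
  covWderiv_eq_zero : covWderiv Aw φtwb w = 0
  covWbarderiv_eq_zero : covWbarderiv Awb φw w = 0

variable {Aw Awb φw φtwb : ℂ → Matrix (Fin n) (Fin n) ℂ} {w : ℂ}

theorem laxCurvature_eq (hAw : DifferentiableAt ℝ Aw w) (hAwb : DifferentiableAt ℝ Awb w)
    (hφ : DifferentiableAt ℝ φw w) (hφt : DifferentiableAt ℝ φtwb w) {z : ℂ} (hz : z ≠ 0) :
    laxCurvature Aw Awb φw φtwb z w =
      (gaugeCurvature Aw Awb w + ⁅φw w, φtwb w⁆) + z • covWderiv Aw φtwb w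
        + z⁻¹ • -covWbarderiv Awb φw w := by
  have wderiv_laxWbar : wderiv (laxWbar Awb φtwb z) w = wderiv Awb w + z • wderiv φtwb w := by
    rw [← wderiv_const_smul]
    exact wderiv_add hAwb (hφt.const_smul z)
  have wbarderiv_laxW : wbarderiv (laxW Aw φw z) w = wbarderiv Aw w + z⁻¹ • wbarderiv φw w := by
    rw [← wbarderiv_const_smul]
    exact wbarderiv_add hAw (hφ.const_smul z⁻¹)
  have lie_laxW_laxWbar : ⁅laxW Aw φw z w, laxWbar Awb φtwb z w⁆ =
      ⁅Aw w, Awb w⁆ + ⁅φw w, φtwb w⁆ + z • ⁅Aw w, φtwb w⁆ - z⁻¹ • ⁅Awb w, φw w⁆ := by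
    simp only [laxW, laxWbar, Ring.lie_def, add_mul, mul_add, smul_mul_assoc, mul_smul_comm,
      smul_add, inv_smul_smul₀ hz, smul_inv_smul₀ hz]
    module
  rw [laxCurvature, ← Ring.lie_def, wderiv_laxWbar, wbarderiv_laxW, lie_laxW_laxWbar,
    gaugeCurvature, covWderiv, covWbarderiv]
  module

theorem forall_laxCurvature_eq_zero_iff (hAw : DifferentiableAt ℝ Aw w)
    (hAwb : DifferentiableAt ℝ Awb w) (hφ : DifferentiableAt ℝ φw w)
    (hφt : DifferentiableAt ℝ φtwb w) :
    (∀ z : ℂ, z ≠ 0 → laxCurvature Aw Awb φw φtwb z w = 0) ↔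
      HitchinEquationsAt Aw Awb φw φtwb w := by
  rw [forall₂_congr fun z hz => by rw [laxCurvature_eq hAw hAwb hφ hφt hz],
    forall_add_smul_add_inv_smul_eq_zero_iff, neg_eq_zero]
  exact ⟨fun ⟨h₀, h₁, h₂⟩ => ⟨h₀, h₁, h₂⟩, fun ⟨h₀, h₁, h₂⟩ => ⟨h₀, h₁, h₂⟩⟩

theorem hitchinEquationsAt_holomorphic_gauge_iff :
    HitchinEquationsAt Aw (fun _ => 0) φw φtwb w ↔
      wbarderiv Aw w = φw w * φtwb w - φtwb w * φw w ∧ wbarderiv φw w = 0 ∧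
        wderiv φtwb w + (Aw w * φtwb w - φtwb w * Aw w) = 0 := by
  have curvature_iff : gaugeCurvature Aw (fun _ => 0) w + ⁅φw w, φtwb w⁆ = 0 ↔
      wbarderiv Aw w = ⁅φw w, φtwb w⁆ := by
    simp [gaugeCurvature, wderiv_const, Ring.lie_def, neg_add_eq_zero]
  have covWbarderiv_zero : covWbarderiv (fun _ => 0) φw w = wbarderiv φw w := by
    simp [covWbarderiv, Ring.lie_def]
  rw [← Ring.lie_def, ← Ring.lie_def, ← curvature_iff, ← covWbarderiv_zero]
  exact ⟨fun ⟨h₀, h₁, h₂⟩ => ⟨h₀, h₂, h₁⟩, fun ⟨h₀, h₂, h₁⟩ => ⟨h₀, h₁, h₂⟩⟩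

end LaxConnection

theorem flat_lax_iff_hitchin_potentials_general {n : ℕ} {h ψ ψt : ℂ → Matrix (Fin n) (Fin n) ℂ}
    {w : ℂ} (hh : ContDiffAt ℝ 2 h w) (hψ : ContDiffAt ℝ 2 ψ w) (hψt : ContDiffAt ℝ 2 ψt w)
    (hinv : IsUnit (h w)) :
    (∀ z : ℂ, z ≠ 0 →
        laxCurvature (fun x => (h x)⁻¹ * wderiv h x) (fun _ => 0)
          (fun x => (h x)⁻¹ * wderiv ψ x * h x) (fun x => wbarderiv ψt x) z w = 0) ↔
      wbarderiv (fun x => (h x)⁻¹ * wderiv h x) w =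
          ((h w)⁻¹ * wderiv ψ w * h w) * wbarderiv ψt w
            - wbarderiv ψt w * ((h w)⁻¹ * wderiv ψ w * h w) ∧
      wbarderiv (fun x => (h x)⁻¹ * wderiv ψ x * h x) w = 0 ∧
      wderiv (fun x => wbarderiv ψt x) w
          + ((h w)⁻¹ * wderiv h w * wbarderiv ψt w
            - wbarderiv ψt w * ((h w)⁻¹ * wderiv h w)) = 0 := by
  have dh : DifferentiableAt ℝ h w := hh.differentiableAt two_ne_zero
  have dhinv : DifferentiableAt ℝ (fun x => (h x)⁻¹) w := differentiableAt_matrix_inv dh hinv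
  have dA : DifferentiableAt ℝ (fun x => (h x)⁻¹ * wderiv h x) w :=
    differentiableAt_matrix_mul dhinv (differentiableAt_wderiv hh)
  have dφ : DifferentiableAt ℝ (fun x => (h x)⁻¹ * wderiv ψ x * h x) w :=
    differentiableAt_matrix_mul (differentiableAt_matrix_mul dhinv (differentiableAt_wderiv hψ)) dh
  rw [forall_laxCurvature_eq_zero_iff dA (differentiableAt_const 0) dφ
    (differentiableAt_wbarderiv hψt), hitchinEquationsAt_holomorphic_gauge_iff]

/-- Hitchin's equations in a holomorphic gauge, in terms of the Hermitian-metric potential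
`h` and the Higgs-field potentials `ψ, ψ̃`: the Lax connection built from
A_w = h⁻¹ ∂_w h, A_w̄ = 0, φ_w = h⁻¹ (∂_w ψ) h, φ̃_w̄ = ∂_w̄ ψ̃
is flat for all spectral parameters iff the potential form of Hitchin's equations holds. -/
theorem flat_lax_iff_hitchin_potentials {n : ℕ} (hn : 1 ≤ n)
    (h ψ ψt : ℂ → Matrix (Fin n) (Fin n) ℂ)
    (hh : ContDiff ℝ (⊤ : ℕ∞) h) (hψ : ContDiff ℝ (⊤ : ℕ∞) ψ) (hψt : ContDiff ℝ (⊤ : ℕ∞) ψt)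
    (hinv : ∀ w : ℂ, IsUnit (h w)) :
    (∀ z : ℂ, z ≠ 0 → ∀ w : ℂ,
        laxCurvature (fun w => (h w)⁻¹ * wderiv h w) (fun _ => 0)
          (fun w => (h w)⁻¹ * wderiv ψ w * h w) (fun w => wbarderiv ψt w) z w = 0) ↔
      (∀ w : ℂ,
        wbarderiv (fun w => (h w)⁻¹ * wderiv h w) w =
            ((h w)⁻¹ * wderiv ψ w * h w) * wbarderiv ψt w
              - wbarderiv ψt w * ((h w)⁻¹ * wderiv ψ w * h w) ∧
        wbarderiv (fun w => (h w)⁻¹ * wderiv ψ w * h w) w = 0 ∧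
        wderiv (fun w => wbarderiv ψt w) w
            + ((h w)⁻¹ * wderiv h w * wbarderiv ψt w
              - wbarderiv ψt w * ((h w)⁻¹ * wderiv h w)) = 0) := by
  have hle : (2 : WithTop ℕ∞) ≤ (⊤ : ℕ∞) := WithTop.coe_le_coe.2 le_top
  have iff_at (w : ℂ) := flat_lax_iff_hitchin_potentials_general
    (hh.of_le hle).contDiffAt (hψ.of_le hle).contDiffAt (hψt.of_le hle).contDiffAt (hinv w)
  exact ⟨fun H w => (iff_at w).1 fun z hz => H z hz w, fun H z hz w => (iff_at w).2 (H w) z hz⟩
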